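/- Let p > 3 be a prime number, let K be a field of characteristic zero, and let A be an associative unital K-algebra which is a division ring with center equal to K and of dimension 9 over K. Then the group Aˣ/Kˣ contains no subgroup isomorphic to μ_3 × μ_3 × μ_p; that is, there is no injective group homomorphism from (ℤ/3ℤ) × (ℤ/3ℤ) × (ℤ/pℤ) into Aˣ/Kˣ. -/

import Mathlib

/-- The central subgroup `Kˣ ⊆ Aˣ`: the units of `A` lying in the image of the structure map
`K → A`. -/
def centralUnits (K A : Type*) [Field K] [DivisionRing A] [Algebra K A] : Subgroup Aˣ :=
  (Units.map (algebraMap K A).toMonoidHom).range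

instance centralUnits_normal (K A : Type*) [Field K] [DivisionRing A] [Algebra K A] :
    (centralUnits K A).Normal := by
  constructor
  intro x hx g
  obtain ⟨k, hk⟩ := hx
  have hx' : (x : A) = algebraMap K A (k : K) := by rw [← hk]; rfl
  have h1 : g * x = x * g := by
    apply Units.ext
    rw [Units.val_mul, Units.val_mul, hx']
    exact (Algebra.commutes (k : K) (g : A)).symm
  have h2 : g * x * g⁻¹ = x := by rw [h1, mul_inv_cancel_right]
  rw [h2]
  exact ⟨k, hk⟩

/-!
Let `q` be prime, `A` central over `K` of dimension `q ^ 2`, and `v ∈ Aˣ` a non-central element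
with `v ^ n ∈ K` for some `n` coprime to `q`. If the class of `u ∈ Aˣ` in `Aˣ ⧸ Kˣ` is killed by `q`
and commutes with that of `v`, then the commutator of `u` and `v` is central and killed by both `q`
and `n`, so `u` and `v` commute. Hence `u` lies in the centralizer of `v`, which is the field
`L = K(v)` of degree `q` over `K`.

Now `v ^ q / N(v)` is an `n`-th root of unity outside `K`, so it generates `L`, and `L / K` is
Galois of prime degree, hence cyclic, with generator `s` say. The map `u ↦ s u / u` sends the
`u ∈ Lˣ` with `u ^ q ∈ K` to the `q`-th roots of unity of `L`, with kernel `Kˣ`, so there are at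
most `q` classes of such `u` in `Lˣ ⧸ Kˣ`: no room for `μ_q × μ_q`.
-/

open IntermediateField
open scoped commutatorElement

section Group

variable {G : Type*} [Group G] {x y : G} {m n : ℕ}

theorem commutator_pow_eq_one_of_pow_mem_center (hc : ⁅x, y⁆ ∈ Subgroup.center G)
    (hy : y ^ n ∈ Subgroup.center G) : ⁅x, y⁆ ^ n = 1 := by
  rw [Subgroup.mem_center_iff] at hc hy
  have hcy : Commute ⁅x, y⁆ y := (hc y).symm
  refine mul_eq_right.1 (?_ : _ * y ^ n = _)
  calc ⁅x, y⁆ ^ n * y ^ n = (x * y * x⁻¹) ^ n := by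
        rw [← hcy.mul_pow, commutatorElement_def, inv_mul_cancel_right]
    _ = y ^ n := by rw [conj_pow, hy x, mul_inv_cancel_right]

theorem commute_of_commutator_mem_center_of_coprime (hmn : m.Coprime n)
    (hc : ⁅x, y⁆ ∈ Subgroup.center G) (hx : x ^ m ∈ Subgroup.center G)
    (hy : y ^ n ∈ Subgroup.center G) : Commute x y := by
  have hm : ⁅x, y⁆ ^ m = 1 := by
    rw [← commutatorElement_inv y x, inv_pow, inv_eq_one]
    refine commutator_pow_eq_one_of_pow_mem_center ?_ hx
    rw [← commutatorElement_inv]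
    exact inv_mem hc
  have hn : ⁅x, y⁆ ^ n = 1 := commutator_pow_eq_one_of_pow_mem_center hc hy
  rw [← commutatorElement_eq_one_iff_commute]
  simpa only [hmn.gcd_eq_one, pow_one] using pow_gcd_eq_one.2 ⟨hm, hn⟩

theorem commute_of_commute_mk_of_coprime {N : Subgroup G} [N.Normal]
    (hN : N ≤ Subgroup.center G) (hmn : m.Coprime n) (hxy : Commute (x : G ⧸ N) y)
    (hx : (x : G ⧸ N) ^ m = 1) (hy : (y : G ⧸ N) ^ n = 1) : Commute x y := by
  rw [← QuotientGroup.mk_pow, QuotientGroup.eq_one_iff] at hx hy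
  refine commute_of_commutator_mem_center_of_coprime hmn (hN ?_) (hN hx) (hN hy)
  rw [← QuotientGroup.eq_one_iff]
  exact (map_commutatorElement (QuotientGroup.mk' N) x y).trans hxy.commutator_eq

end Group

theorem mem_of_pow_mem_of_pow_mem_of_coprime {S L : Type*} [DivisionRing L] [SetLike S L]
    [SubfieldClass S L] {s : S} {x : L} {m n : ℕ} (hmn : m.Coprime n) (hm : x ^ m ∈ s)
    (hn : x ^ n ∈ s) : x ∈ s := by
  obtain rfl | hx := eq_or_ne x 0
  · exact zero_mem s
  obtain ⟨u, v, huv⟩ := Nat.isCoprime_iff_coprime.2 hmn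
  have hx_eq : (x ^ m) ^ u * (x ^ n) ^ v = x := by
    rw [← zpow_natCast, ← zpow_natCast, ← zpow_mul, ← zpow_mul, ← zpow_add₀ hx, mul_comm _ u,
      mul_comm _ v, huv, zpow_one]
  exact hx_eq ▸ mul_mem (zpow_mem hm u) (zpow_mem hn v)

section FieldExtension

variable {K L : Type*} [Field K] [Field L] [Algebra K L]

theorem pow_finrank_div_norm_pow_eq_one {x : L} {n : ℕ} (hx : x ≠ 0)
    (hxn : x ^ n ∈ (⊥ : IntermediateField K L)) :
    (x ^ Module.finrank K L / algebraMap K L (Algebra.norm K x)) ^ n = 1 := by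
  obtain ⟨a, ha⟩ := mem_bot.1 hxn
  have norm_pow : Algebra.norm K x ^ n = a ^ Module.finrank K L := by
    rw [← map_pow, ← ha, Algebra.norm_algebraMap]
  rw [div_pow, ← map_pow, norm_pow, map_pow, ha, ← pow_mul, ← pow_mul',
    div_self (pow_ne_zero _ hx)]

theorem isGalois_of_adjoin_eq_top_of_pow_eq_one [Algebra.IsIntegral K L] {z : L} {n : ℕ}
    (hn : n ≠ 0) (hz : z ^ n = 1) (htop : K⟮z⟯ = ⊤) : IsGalois K L := by
  have : NeZero (orderOf z) :=
    ⟨(isOfFinOrder_iff_pow_eq_one.2 ⟨n, Nat.pos_of_ne_zero hn, hz⟩).orderOf_pos.ne'⟩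
  have := (IsPrimitiveRoot.orderOf z).intermediateField_adjoin_isCyclotomicExtension K
  have : IsGalois K K⟮z⟯ := IsCyclotomicExtension.isGalois {orderOf z} K _
  rw [htop] at this
  exact IsGalois.of_algEquiv topEquiv

theorem isGalois_of_finrank_prime_of_pow_mem_bot {x : L} {n : ℕ}
    (hL : (Module.finrank K L).Prime) (hn : n.Coprime (Module.finrank K L))
    (hx : x ∉ (⊥ : IntermediateField K L)) (hxn : x ^ n ∈ (⊥ : IntermediateField K L)) :
    IsGalois K L := by
  have : FiniteDimensional K L := Module.finite_of_finrank_pos hL.pos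
  have : IsSimpleOrder (IntermediateField K L) := isSimpleOrder_of_finrank_prime K L hL
  have hx0 : x ≠ 0 := fun h ↦ hx (h ▸ zero_mem _)
  have hn0 : n ≠ 0 := fun h ↦ hL.ne_one ((Nat.coprime_zero_left _).1 (h ▸ hn))
  have norm_ne_zero : algebraMap K L (Algebra.norm K x) ≠ 0 := by
    simpa using hx0
  have root_notMem : x ^ Module.finrank K L / algebraMap K L (Algebra.norm K x) ∉
      (⊥ : IntermediateField K L) := fun h ↦ hx <|
    mem_of_pow_mem_of_pow_mem_of_coprime hn hxn <|
      div_mul_cancel₀ (x ^ Module.finrank K L) norm_ne_zero ▸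
        mul_mem h (IntermediateField.algebraMap_mem _ _)
  exact isGalois_of_adjoin_eq_top_of_pow_eq_one hn0 (pow_finrank_div_norm_pow_eq_one hx0 hxn)
    ((eq_bot_or_eq_top _).resolve_left (mt adjoin_simple_eq_bot_iff.1 root_notMem))

theorem mem_bot_iff_apply_eq_self_of_zpowers_eq_top [IsGalois K L]
    {s : Gal(L/K)} (hs : Subgroup.zpowers s = ⊤) {x : L} :
    x ∈ (⊥ : IntermediateField K L) ↔ s x = x := by
  refine (InfiniteGalois.mem_bot_iff_fixed x).trans ⟨fun h ↦ h s, fun h t ↦ ?_⟩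
  obtain ⟨k, rfl⟩ := Subgroup.mem_zpowers_iff.1 (hs ▸ Subgroup.mem_top t)
  exact (MulAction.mem_fixedBy_zpowers_iff_mem_fixedBy (g := s) (a := x)).2 h k

theorem exists_eq_smul_of_apply_div_self_eq [IsGalois K L] {s : Gal(L/K)}
    (hs : Subgroup.zpowers s = ⊤) {x y : L} (hx : x ≠ 0) (hy : y ≠ 0)
    (h : s x / x = s y / y) : ∃ a : K, x = a • y := by
  have hsy : s y ≠ 0 := (map_ne_zero s).2 hy
  have div_fixed : s (x / y) = x / y := by
    rw [map_div₀, div_eq_div_iff hsy hy, (div_eq_div_iff hx hy).1 h, mul_comm]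
  obtain ⟨a, ha⟩ := mem_bot.1 ((mem_bot_iff_apply_eq_self_of_zpowers_eq_top hs).2 div_fixed)
  exact ⟨a, by rw [Algebra.smul_def, ha, div_mul_cancel₀ x hy]⟩

theorem card_le_of_pow_mem_bot_of_isCyclic [IsGalois K L] [hcyc : IsCyclic Gal(L/K)] {ι : Type*}
    {n : ℕ} [NeZero n] {x : ι → L}
    (hx0 : ∀ i, x i ≠ 0) (hxn : ∀ i, x i ^ n ∈ (⊥ : IntermediateField K L))
    (hx : Pairwise fun i j ↦ ∀ a : K, x i ≠ a • x j) : ENat.card ι ≤ n := by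
  obtain ⟨s, hs⟩ := isCyclic_iff_exists_zpowers_eq_top.1 hcyc
  have root_of_unity (i : ι) : (s (x i) / x i) ^ n = 1 := by
    rw [div_pow, ← map_pow, (mem_bot_iff_apply_eq_self_of_zpowers_eq_top hs).1 (hxn i),
      div_self (pow_ne_zero n (hx0 i))]
  let ζ (i : ι) : rootsOfUnity n L := rootsOfUnity.mkOfPowEq _ (root_of_unity i)
  have ζ_injective : Function.Injective ζ := by
    intro i j hij
    by_contra hne
    obtain ⟨a, ha⟩ := exists_eq_smul_of_apply_div_self_eq hs (hx0 i) (hx0 j) <| by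
      simpa only [ζ, rootsOfUnity.coe_mkOfPowEq] using
        congrArg (fun u : rootsOfUnity n L ↦ ((u : Lˣ) : L)) hij
    exact hx hne a ha
  calc ENat.card ι ≤ ENat.card (rootsOfUnity n L) := ENat.card_le_card_of_injective ζ_injective
    _ = Nat.card (rootsOfUnity n L) := ENat.card_eq_coe_natCard _
    _ ≤ n := by exact_mod_cast card_rootsOfUnity L n

theorem card_le_finrank_of_pow_finrank_mem_bot (hL : (Module.finrank K L).Prime) {y : L} {n : ℕ}
    (hn : n.Coprime (Module.finrank K L)) (hy : y ∉ (⊥ : IntermediateField K L))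
    (hyn : y ^ n ∈ (⊥ : IntermediateField K L)) {ι : Type*} {x : ι → L}
    (hx0 : ∀ i, x i ≠ 0) (hxL : ∀ i, x i ^ Module.finrank K L ∈ (⊥ : IntermediateField K L))
    (hx : Pairwise fun i j ↦ ∀ a : K, x i ≠ a • x j) : ENat.card ι ≤ Module.finrank K L := by
  have : FiniteDimensional K L := Module.finite_of_finrank_pos hL.pos
  have : IsGalois K L := isGalois_of_finrank_prime_of_pow_mem_bot hL hn hy hyn
  have : Fact (Module.finrank K L).Prime := ⟨hL⟩
  have : IsCyclic Gal(L/K) := isCyclic_of_prime_card (IsGalois.card_aut_eq_finrank K L)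
  exact card_le_of_pow_mem_bot_of_isCyclic hx0 hxL hx

end FieldExtension

section DivisionAlgebra

variable {K A : Type*} [Field K] [Ring A] [Algebra K A]

theorem finrank_subalgebra_dvd_finrank [IsDomain A] [FiniteDimensional K A] (S : Subalgebra K A) :
    Module.finrank K S ∣ Module.finrank K A := by
  let _ : DivisionRing S := divisionRingOfFiniteDimensional K S
  exact Dvd.intro _ (Module.finrank_mul_finrank K S A)

theorem finrank_subalgebra_eq_of_finrank_eq_sq [IsDomain A] {q : ℕ} (hq : q.Prime)
    (hA : Module.finrank K A = q ^ 2) {S : Subalgebra K A} (hbot : S ≠ ⊥) (htop : S ≠ ⊤) :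
    Module.finrank K S = q := by
  have : FiniteDimensional K A := Module.finite_of_finrank_pos (hA ▸ pow_pos hq.pos 2)
  obtain ⟨k, hk, hS⟩ := (Nat.dvd_prime_pow hq).1 (hA ▸ finrank_subalgebra_dvd_finrank S)
  interval_cases k
  · exact absurd (Subalgebra.finrank_eq_one_iff.1 (hS.trans (pow_zero q))) hbot
  · exact hS.trans (pow_one q)
  · exact absurd (Algebra.toSubmodule_eq_top.1 <|
      Submodule.eq_top_of_finrank_eq (hS.trans hA.symm)) htop

variable {q : ℕ} {y : A}

theorem centralizer_singleton_ne_top [Algebra.IsCentral K A] (hy : y ∉ (⊥ : Subalgebra K A)) :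
    Subalgebra.centralizer K {y} ≠ ⊤ := by
  rw [Ne, Subalgebra.centralizer_eq_top_iff_subset, Set.singleton_subset_iff]
  exact fun h ↦ hy (Algebra.IsCentral.out h)

theorem adjoin_singleton_ne_bot (hy : y ∉ (⊥ : Subalgebra K A)) : Algebra.adjoin K {y} ≠ ⊥ :=
  fun h ↦ hy (h ▸ Algebra.self_mem_adjoin_singleton K y)

theorem adjoin_singleton_le_centralizer (y : A) :
    Algebra.adjoin K {y} ≤ Subalgebra.centralizer K {y} :=
  Algebra.adjoin_singleton_le <| (Subalgebra.mem_centralizer_iff K).2 (by simp)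

theorem finrank_adjoin_singleton_of_finrank_eq_sq [IsDomain A] [Algebra.IsCentral K A]
    (hq : q.Prime) (hA : Module.finrank K A = q ^ 2) (hy : y ∉ (⊥ : Subalgebra K A)) :
    Module.finrank K (Algebra.adjoin K {y}) = q :=
  finrank_subalgebra_eq_of_finrank_eq_sq hq hA (adjoin_singleton_ne_bot hy) fun h ↦
    centralizer_singleton_ne_top hy (top_le_iff.1 (h ▸ adjoin_singleton_le_centralizer y))

theorem adjoin_singleton_eq_centralizer_of_finrank_eq_sq [IsDomain A] [Algebra.IsCentral K A]
    (hq : q.Prime) (hA : Module.finrank K A = q ^ 2) (hy : y ∉ (⊥ : Subalgebra K A)) :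
    Algebra.adjoin K {y} = Subalgebra.centralizer K {y} := by
  have : FiniteDimensional K A := Module.finite_of_finrank_pos (hA ▸ pow_pos hq.pos 2)
  have hle : Algebra.adjoin K {y} ≤ Subalgebra.centralizer K {y} :=
    adjoin_singleton_le_centralizer y
  have centralizer_ne_bot : Subalgebra.centralizer K {y} ≠ ⊥ :=
    ne_bot_of_le_ne_bot (adjoin_singleton_ne_bot hy) hle
  refine Subalgebra.eq_of_le_of_finrank_eq hle ?_
  rw [finrank_adjoin_singleton_of_finrank_eq_sq hq hA hy,
    finrank_subalgebra_eq_of_finrank_eq_sq hq hA centralizer_ne_bot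
      (centralizer_singleton_ne_top hy)]

theorem card_le_of_pow_mem_bot_of_commute [IsDomain A] [Algebra.IsCentral K A]
    (hq : q.Prime) (hA : Module.finrank K A = q ^ 2) {n : ℕ} (hn : n.Coprime q)
    (hy : y ∉ (⊥ : Subalgebra K A)) (hyn : y ^ n ∈ (⊥ : Subalgebra K A)) {ι : Type*} {x : ι → A}
    (hx0 : ∀ i, x i ≠ 0) (hxq : ∀ i, x i ^ q ∈ (⊥ : Subalgebra K A))
    (hxy : ∀ i, Commute (x i) y) (hx : Pairwise fun i j ↦ ∀ a : K, x i ≠ a • x j) :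
    ENat.card ι ≤ q := by
  have : FiniteDimensional K A := Module.finite_of_finrank_pos (hA ▸ pow_pos hq.pos 2)
  have hL := adjoin_singleton_eq_centralizer_of_finrank_eq_sq hq hA hy
  have finrank_L := finrank_adjoin_singleton_of_finrank_eq_sq hq hA hy
  set L := Algebra.adjoin K {y}
  have : IsMulCommutative L := Algebra.isMulCommutative_adjoin_singleton K y
  let _ : Field L := fieldOfFiniteDimensional K L
  have mem_bot_iff (z : L) : z ∈ (⊥ : IntermediateField K L) ↔ (z : A) ∈ (⊥ : Subalgebra K A) := by
    simp only [mem_bot, Algebra.mem_bot, Set.mem_range, Subtype.ext_iff]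
    rfl
  have hxL (i : ι) : x i ∈ L :=
    hL ▸ (Subalgebra.mem_centralizer_iff K).2 (by simpa using (hxy i).eq.symm)
  subst finrank_L
  exact card_le_finrank_of_pow_finrank_mem_bot (K := K) (L := L) hq hn
    (y := ⟨y, Algebra.self_mem_adjoin_singleton K y⟩) ((mem_bot_iff _).not.2 hy)
    ((mem_bot_iff _).2 hyn) (x := fun i ↦ ⟨x i, hxL i⟩)
    (fun i h ↦ hx0 i (congrArg Subtype.val h)) (fun i ↦ (mem_bot_iff _).2 (hxq i))
    (fun i j hij a h ↦ hx hij a (congrArg Subtype.val h))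

end DivisionAlgebra

section CentralUnits

variable {K A : Type*} [Field K] [DivisionRing A] [Algebra K A]

theorem mem_centralUnits_iff {u : Aˣ} : u ∈ centralUnits K A ↔ (u : A) ∈ (⊥ : Subalgebra K A) := by
  rw [Algebra.mem_bot]
  constructor
  · rintro ⟨k, rfl⟩
    exact ⟨k, rfl⟩
  · rintro ⟨k, hk⟩
    have hk0 : k ≠ 0 := by
      rintro rfl
      exact u.ne_zero (by rw [← hk, map_zero])
    exact ⟨Units.mk0 k hk0, Units.ext hk⟩

theorem centralUnits_le_center : centralUnits K A ≤ Subgroup.center Aˣ := by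
  rintro _ ⟨k, rfl⟩
  exact Subgroup.mem_center_iff.2 fun u ↦ Units.ext (Algebra.commutes (k : K) (u : A)).symm

theorem mk_centralUnits_eq_of_eq_smul {u v : Aˣ} {a : K} (h : (u : A) = a • (v : A)) :
    (u : Aˣ ⧸ centralUnits K A) = v := by
  rw [QuotientGroup.eq_iff_div_mem, mem_centralUnits_iff, Units.val_div_eq_div_val, h,
    Algebra.smul_def, mul_div_cancel_right₀ _ v.ne_zero]
  exact Subalgebra.algebraMap_mem ⊥ a

theorem mk_centralUnits_pow_eq_one_iff {u : Aˣ} {n : ℕ} :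
    (u : Aˣ ⧸ centralUnits K A) ^ n = 1 ↔ (u : A) ^ n ∈ (⊥ : Subalgebra K A) := by
  rw [← QuotientGroup.mk_pow, QuotientGroup.eq_one_iff, mem_centralUnits_iff,
    Units.val_pow_eq_pow_val]

theorem card_le_of_pow_eq_one_of_commute [Algebra.IsCentral K A] {q n : ℕ} (hq : q.Prime)
    (hA : Module.finrank K A = q ^ 2) (hn : n.Coprime q) {y : Aˣ ⧸ centralUnits K A}
    (hy : y ≠ 1) (hyn : y ^ n = 1) {ι : Type*} {x : ι → Aˣ ⧸ centralUnits K A}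
    (hx : Function.Injective x) (hxq : ∀ i, x i ^ q = 1) (hxy : ∀ i, Commute (x i) y) :
    ENat.card ι ≤ q := by
  obtain ⟨v, rfl⟩ := QuotientGroup.mk_surjective y
  choose u hu using fun i ↦ QuotientGroup.mk_surjective (x i)
  obtain rfl : (fun i ↦ (u i : Aˣ ⧸ centralUnits K A)) = x := funext hu
  have huv (i : ι) : Commute (u i) v :=
    commute_of_commute_mk_of_coprime centralUnits_le_center hn.symm (hxy i) (hxq i) hyn
  rw [Ne, QuotientGroup.eq_one_iff, mem_centralUnits_iff] at hy
  exact card_le_of_pow_mem_bot_of_commute hq hA hn hy (mk_centralUnits_pow_eq_one_iff.1 hyn)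
    (fun i ↦ (u i).ne_zero) (fun i ↦ mk_centralUnits_pow_eq_one_iff.1 (hxq i))
    (fun i ↦ (huv i).units_val)
    (fun i j hij a h ↦ hij (hx (mk_centralUnits_eq_of_eq_smul h)))

end CentralUnits

theorem stmt_16_general {q n : ℕ} (hq : q.Prime) (hn1 : n ≠ 1) (hn : n.Coprime q)
    {K A : Type*} [Field K] [DivisionRing A] [Algebra K A] [Algebra.IsCentral K A]
    (hA : Module.finrank K A = q ^ 2)
    (f : Multiplicative (ZMod q × ZMod q × ZMod n) →* (Aˣ ⧸ centralUnits K A)) :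
    ¬ Function.Injective f := by
  intro hf
  have : NeZero q := ⟨hq.ne_zero⟩
  have : Nontrivial (ZMod n) := ZMod.nontrivial_iff.2 hn1
  let x (i : ZMod q × ZMod q) : Multiplicative (ZMod q × ZMod q × ZMod n) := .ofAdd (i.1, i.2, 0)
  let y : Multiplicative (ZMod q × ZMod q × ZMod n) := .ofAdd (0, 0, 1)
  have x_injective : Function.Injective x := fun i j h ↦ by
    simpa [x, Prod.ext_iff] using h
  have x_pow (i) : x i ^ q = 1 := by simp [x, ← ofAdd_nsmul]
  have y_pow : y ^ n = 1 := by simp [y, ← ofAdd_nsmul]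
  have y_ne_one : y ≠ 1 := by simp [y]
  have card_le : ENat.card (ZMod q × ZMod q) ≤ q :=
    card_le_of_pow_eq_one_of_commute hq hA hn ((map_ne_one_iff f hf).2 y_ne_one)
      (by rw [← map_pow, y_pow, map_one]) (hf.comp x_injective)
      (fun i ↦ by rw [Function.comp_apply, ← map_pow, x_pow, map_one])
      (fun i ↦ (Commute.all (x i) y).map f)
  rw [ENat.card_eq_coe_natCard, Nat.card_prod, Nat.card_zmod, Nat.cast_le] at card_le
  exact card_le.not_gt (lt_mul_self hq.one_lt)

/-- Let `p > 3` be a prime, `K` a field of characteristic zero, and `A` a central division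
algebra of dimension `9` over `K`. Then the group `Aˣ/Kˣ` (the automorphism group of the
non-trivial Severi–Brauer surface corresponding to `A`) contains no subgroup isomorphic to
`μ₃ × μ₃ × μ_p`: there is no injective group homomorphism
`(ℤ/3ℤ) × (ℤ/3ℤ) × (ℤ/pℤ) → Aˣ/Kˣ`. -/
theorem stmt_16 (p : ℕ) (hp : p.Prime) (hp3 : 3 < p)
    (K : Type) [Field K] [CharZero K]
    (A : Type) [DivisionRing A] [Algebra K A]
    (hcenter : Subalgebra.center K A = ⊥) (hrank : Module.finrank K A = 9) :
    ∀ f : Multiplicative (ZMod 3 × ZMod 3 × ZMod p) →* (Aˣ ⧸ centralUnits K A),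
      ¬ Function.Injective f := by
  have : Algebra.IsCentral K A := ⟨hcenter.le⟩
  exact stmt_16_general Nat.prime_three hp.ne_one
    ((Nat.coprime_primes hp Nat.prime_three).2 hp3.ne') (hrank.trans (by norm_num))
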